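/- Let G be a connected graph with at least two edges and let n₂ be the number of inner vertices of G. Then rc(L(G)) ≤ n₂. (Indeed, the edge coloring of L(G) that, for each inner vertex v of G, assigns one fresh color to all edges of the clique of L(G) induced by the star S(v) of edges incident to v, makes L(G) rainbow connected.) -/

import Mathlib

open SimpleGraph

/-- An edge coloring `c` (colors on `Sym2 V`, only values on edges matter) makes `G`
rainbow connected if any two vertices are joined by a path no two of whose edges
get the same color. -/
def SimpleGraph.RainbowConnected {V α : Type*} (G : SimpleGraph V) (c : Sym2 V → α) : Prop :=
  ∀ u v : V, ∃ p : G.Walk u v, p.IsPath ∧ (p.edges.map c).Nodup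

/-- The rainbow connection number of `G`: the least `k` such that some edge coloring
with at most `k` colors makes `G` rainbow connected. -/
noncomputable def SimpleGraph.rc {V : Type*} (G : SimpleGraph V) : ℕ :=
  sInf {k | ∃ c : Sym2 V → ℕ, (∀ e ∈ G.edgeSet, c e < k) ∧ G.RainbowConnected c}

/-- The number of inner vertices (vertices of degree at least two) of `G`. -/
noncomputable def innerCount {V : Type*} (G : SimpleGraph V) : ℕ :=
  {v : V | 2 ≤ Nat.card (G.neighborSet v)}.ncard

/-!
Color an edge `ef` of `L(G)` by the vertex of `G` that `e` and `f` share. Such a vertex is inner,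
so at most `n₂` colors occur. Given edges `e ∋ u` and `f ∋ v` of `G`, a path of `G` from `u` to `v`
lifts to a walk of `L(G)` from `e` to `f` whose successive colors are vertices of the path, in the
same order; they are distinct because a path does not repeat a vertex, and shortcutting the walk
to a path keeps them distinct.
-/

section RainbowConnected

variable {V α β : Type*} {G : SimpleGraph V} {c : Sym2 V → α}

lemma rainbowConnected_of_forall_exists_walk
    (h : ∀ u v, ∃ p : G.Walk u v, (p.edges.map c).Nodup) : G.RainbowConnected c := by
  classical
  intro u v
  obtain ⟨p, hp⟩ := h u v
  exact ⟨p.bypass, p.bypass_isPath, hp.sublist (p.edges_bypass_sublist_edges.map c)⟩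

lemma rainbowConnected_comp_of_injOn {S : Set α} {f : α → β} (hc : G.RainbowConnected c)
    (hS : Set.MapsTo c G.edgeSet S) (hf : S.InjOn f) : G.RainbowConnected (f ∘ c) := by
  intro u v
  obtain ⟨p, hp, hnodup⟩ := hc u v
  have mem_colors : ∀ a ∈ p.edges.map c, a ∈ S :=
    List.forall_mem_map.2 fun _ he ↦ hS (p.edges_subset_edgeSet he)
  refine ⟨p, hp, ?_⟩
  rw [← List.map_map]
  exact hnodup.map_on fun a ha b hb ↦ hf (mem_colors a ha) (mem_colors b hb)

lemma rc_le_ncard {S : Set α} (hfin : S.Finite) (hS : Set.MapsTo c G.edgeSet S)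
    (hc : G.RainbowConnected c) : G.rc ≤ S.ncard := by
  have hcard : S.encard ≤ (Set.Iio S.ncard).encard := by
    rw [← hfin.cast_ncard_eq, ← (Set.finite_Iio _).cast_ncard_eq, Set.ncard_Iio_nat]
  obtain ⟨f, hlt, hinj⟩ := hfin.exists_injOn_of_encard_le hcard
  exact Nat.sInf_le ⟨f ∘ c, fun e he ↦ hlt (hS he), rainbowConnected_comp_of_injOn hc hS hinj⟩

end RainbowConnected

section StarColor

variable {V : Type*} {G : SimpleGraph V} {e f g : G.edgeSet} {u v : V}

/-- The star coloring of the line graph of `G`: each edge of the clique `⟨S(v)⟩` gets the color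
`v`. An edge `s(e, f)` of the line graph lies in exactly one of these cliques, so its color is
*the* common vertex of `e` and `f`; the value is arbitrary on pairs of disjoint edges of `G`, and
on a diagonal pair `s(e, e)` it is an unspecified endpoint of `e`. -/
noncomputable def starColor [Nonempty V] (G : SimpleGraph V) (x : Sym2 G.edgeSet) : V :=
  Classical.epsilon fun v ↦ ∀ e ∈ x, v ∈ e.1

lemma starColor_eq [Nonempty V] (hef : e ≠ f) (he : v ∈ e.1) (hf : v ∈ f.1) :
    starColor G s(e, f) = v := by
  have hmem : ∀ g ∈ s(e, f), starColor G s(e, f) ∈ g.1 :=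
    Classical.epsilon_spec (p := fun w ↦ ∀ g ∈ s(e, f), w ∈ g.1) ⟨v, Sym2.ball.2 ⟨he, hf⟩⟩
  obtain ⟨he', hf'⟩ := Sym2.ball.1 hmem
  by_contra hne
  exact hef (Subtype.ext (Sym2.eq_of_ne_mem hne he' he hf' hf))

lemma nontrivial_neighborSet_of_mem_of_mem (hef : e ≠ f) (he : v ∈ e.1) (hf : v ∈ f.1) :
    Nontrivial (G.neighborSet v) := by
  obtain ⟨e, he'⟩ := e
  obtain ⟨f, hf'⟩ := f
  obtain ⟨a, rfl⟩ := Sym2.mem_iff_exists.1 he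
  obtain ⟨b, rfl⟩ := Sym2.mem_iff_exists.1 hf
  refine ⟨⟨a, he'⟩, ⟨b, hf'⟩, fun hab ↦ hef ?_⟩
  obtain rfl : a = b := congrArg Subtype.val hab
  rfl

lemma mapsTo_starColor [Nonempty V] [∀ v, Finite (G.neighborSet v)] :
    Set.MapsTo (starColor G) G.lineGraph.edgeSet {v | 2 ≤ Nat.card (G.neighborSet v)} := by
  intro x hx
  induction x with | _ e f
  obtain ⟨hef, v, he, hf⟩ := lineGraph_adj_iff_exists.1 ((mem_edgeSet _).1 hx)
  have := nontrivial_neighborSet_of_mem_of_mem hef he hf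
  rw [starColor_eq hef he hf]
  exact Finite.one_lt_card

lemma exists_lineGraph_walk_sublist_cons [Nonempty V] (he : u ∈ e.1) (hf : u ∈ f.1)
    (q : G.lineGraph.Walk f g) :
    ∃ r : G.lineGraph.Walk e g,
      (r.edges.map (starColor G)).Sublist (u :: q.edges.map (starColor G)) := by
  obtain rfl | hef := eq_or_ne e f
  · exact ⟨q, List.sublist_cons_self _ _⟩
  · have hadj : G.lineGraph.Adj e f := lineGraph_adj_iff_exists.2 ⟨hef, u, he, hf⟩
    refine ⟨.cons hadj q, ?_⟩
    rw [Walk.edges_cons, List.map_cons, starColor_eq hef he hf]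

lemma exists_lineGraph_walk_sublist_support [Nonempty V] (p : G.Walk u v)
    (he : u ∈ e.1) (hf : v ∈ f.1) :
    ∃ q : G.lineGraph.Walk e f, (q.edges.map (starColor G)).Sublist p.support := by
  induction p generalizing e with
  | nil => exact exists_lineGraph_walk_sublist_cons he hf .nil
  | @cons u w _ huw p ih =>
    obtain ⟨q, hq⟩ := ih (e := ⟨s(u, w), huw⟩) (Sym2.mem_mk_right u w) hf
    obtain ⟨r, hr⟩ := exists_lineGraph_walk_sublist_cons he (Sym2.mem_mk_left u w) q
    exact ⟨r, hr.trans (hq.cons_cons u)⟩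

lemma rainbowConnected_starColor [Nonempty V] (hG : G.Preconnected) :
    G.lineGraph.RainbowConnected (starColor G) := by
  refine rainbowConnected_of_forall_exists_walk fun e f ↦ ?_
  obtain ⟨p, hp⟩ := (hG e.1.out.1 f.1.out.1).exists_isPath
  obtain ⟨q, hq⟩ :=
    exists_lineGraph_walk_sublist_support p e.1.out_fst_mem f.1.out_fst_mem
  exact ⟨q, hp.support_nodup.sublist hq⟩

end StarColor

/-- If `G` is a connected graph with at least two edges and `n₂` inner vertices, then
`rc (L(G)) ≤ n₂`. -/
theorem rc_lineGraph_le_innerCount {V : Type*} [Fintype V] [DecidableEq V]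
    (G : SimpleGraph V) [DecidableRel G.Adj] (hG : G.Connected)
    (h2 : 2 ≤ G.edgeFinset.card) :
    G.lineGraph.rc ≤ innerCount G := by
  have : Nonempty V := hG.nonempty
  exact rc_le_ncard (Set.toFinite _) mapsTo_starColor (rainbowConnected_starColor hG.preconnected)
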